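/- Let G be a finite simple connected graph. Then (i) for every vertex v ∈ V(G), d₂(v|Q(G)) ≥ d₁(v|G) + d₂(v|G), and equality holds for all v ∈ V(G) if and only if G is {C₃,C₄}-free; and (ii) for every edge e ∈ E(G) (viewed as the corresponding subdivision vertex of Q(G) and as a vertex of L(G)), d₂(e|Q(G)) ≤ d₁(e|L(G)) + d₂(e|L(G)), and equality holds for all e ∈ E(G) if and only if G is C₃-free. -/

import Mathlib

/-!
The graph `Q(G)` has two kinds of vertices, so each second degree in `Q(G)` splits in two parts.

* At an original vertex `v`, the original vertices at distance 2 are the neighbours of `v` in `G`,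
  and the edges at distance 2 are the edges avoiding `v` that contain a neighbour of `v`. Thus
  `d₂(v|Q) = d₁(v|G) + |B|` with `B` this set of edges, to be compared with the set `A` of
  vertices at distance 2 from `v` in `G`.
* At an edge `e`, the edges at distance 2 are those at distance 2 in `L(G)`, and the vertices at
  distance 2 are the vertices outside `e` that are adjacent to an end of `e`. Thus
  `d₂(e|Q) = |A| + d₂(e|L)` with `A` this set of vertices, to be compared with the set `B` of
  neighbours of `e` in `L(G)`.

In both cases every vertex of `A` lies on some edge of `B`, and every edge of `B` contains at most
one vertex of `A`. Hence `|A| ≤ |B|`, with equality iff incidence is a perfect one-to-one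
correspondence between `A` and `B` (`card_le_of_rel`). In the first case this fails to cover an
edge of `B` exactly at a triangle through `v`, and if there is no such triangle, it fails to be
one-to-one exactly at a 4-cycle through `v`. In the second case every edge of `B` is covered,
and two edges of `B` through the same vertex of `A` form a triangle with `e`.
-/

/-!
Definitions for the leap eccentric connectivity index of graph operations with
subdivided edges (Song–Tang).
-/

open SimpleGraph Finset
open scoped Classical

noncomputable section

instance edgeSetFintypeOfFintype {V : Type*} [Fintype V] (G : SimpleGraph V) :
    Fintype G.edgeSet :=
  Set.Finite.fintype (Set.toFinite _)

/-- Eccentricity `e(v|X)` of a vertex: the maximum distance from `v` to a vertex of `X`. -/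
def ecc {V : Type*} [Fintype V] (X : SimpleGraph V) (v : V) : ℕ :=
  Finset.univ.sup (fun u => X.dist v u)

/-- `d₁(v|X)`: the degree of `v`. -/
def deg1 {V : Type*} [Fintype V] (X : SimpleGraph V) (v : V) : ℕ :=
  (Finset.univ.filter (fun u => X.Adj v u)).card

/-- `d₂(v|X)`: the second degree of `v`, the number of vertices at distance exactly 2. -/
def deg2 {V : Type*} [Fintype V] (X : SimpleGraph V) (v : V) : ℕ :=
  (Finset.univ.filter (fun u => X.dist v u = 2)).card

/-- The leap eccentric connectivity index `Lξᶜ(X) = Σ_v d₂(v|X)·e(v|X)`. -/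
def leapECI {V : Type*} [Fintype V] (X : SimpleGraph V) : ℕ :=
  ∑ v, deg2 X v * ecc X v

/-- The eccentric connectivity index `ξᶜ(X) = Σ_v d₁(v|X)·e(v|X)`. -/
def eci {V : Type*} [Fintype V] (X : SimpleGraph V) : ℕ :=
  ∑ v, deg1 X v * ecc X v

/-- The first Zagreb index `M₁(X) = Σ_v d₁(v|X)²`. -/
def zagrebM1 {V : Type*} [Fintype V] (X : SimpleGraph V) : ℕ :=
  ∑ v, (deg1 X v) ^ 2

/-- The total eccentricity `θ(X) = Σ_v e(v|X)`. -/
def totalEcc {V : Type*} [Fintype V] (X : SimpleGraph V) : ℕ :=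
  ∑ v, ecc X v

/-- The number of edges `|E(X)|`. -/
def numEdges {V : Type*} (X : SimpleGraph V) : ℕ := X.edgeSet.ncard

/-- The line graph `L(G)`, with vertex set `E(G)`: two edges of `G` are adjacent in
`L(G)` iff they are distinct and share an endpoint. -/
def lineG {V : Type*} (G : SimpleGraph V) : SimpleGraph G.edgeSet :=
  SimpleGraph.fromRel (fun e f => ∃ v, v ∈ (e : Sym2 V) ∧ v ∈ (f : Sym2 V))

/-- The subdivision graph `S(G)`, with vertex set `V(G) ⊕ E(G)`:
`v ∈ V(G)` is adjacent to `e ∈ E(G)` iff `v` is an endpoint of `e`; no other edges. -/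
def subdivG {V : Type*} (G : SimpleGraph V) : SimpleGraph (V ⊕ G.edgeSet) :=
  SimpleGraph.fromRel (fun a b => match a, b with
    | Sum.inl v, Sum.inr e => v ∈ (e : Sym2 V)
    | _, _ => False)

/-- The graph `Q(G)`, with vertex set `V(G) ⊕ E(G)`: `v ∈ V(G)` is adjacent to
`e ∈ E(G)` iff `v` is an endpoint of `e`, and distinct `e, e' ∈ E(G)` are adjacent
iff the corresponding edges share an endpoint in `G`. -/
def qGraph {V : Type*} (G : SimpleGraph V) : SimpleGraph (V ⊕ G.edgeSet) :=
  SimpleGraph.fromRel (fun a b => match a, b with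
    | Sum.inl v, Sum.inr e => v ∈ (e : Sym2 V)
    | Sum.inr e, Sum.inr f => ∃ v, v ∈ (e : Sym2 V) ∧ v ∈ (f : Sym2 V)
    | _, _ => False)

/-- The graph `R(G)`, with vertex set `V(G) ⊕ E(G)`: `v, v' ∈ V(G)` are adjacent iff
they are adjacent in `G`, and `v ∈ V(G)` is adjacent to `e ∈ E(G)` iff `v` is an
endpoint of `e`. -/
def rGraph {V : Type*} (G : SimpleGraph V) : SimpleGraph (V ⊕ G.edgeSet) :=
  SimpleGraph.fromRel (fun a b => match a, b with
    | Sum.inl v, Sum.inl w => G.Adj v w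
    | Sum.inl v, Sum.inr e => v ∈ (e : Sym2 V)
    | _, _ => False)

/-- The total graph `T(G)`, with vertex set `V(G) ⊕ E(G)`: adjacency holds iff the
corresponding elements of `G` are adjacent or incident. -/
def tGraph {V : Type*} (G : SimpleGraph V) : SimpleGraph (V ⊕ G.edgeSet) :=
  SimpleGraph.fromRel (fun a b => match a, b with
    | Sum.inl v, Sum.inl w => G.Adj v w
    | Sum.inl v, Sum.inr e => v ∈ (e : Sym2 V)
    | Sum.inr e, Sum.inr f => ∃ v, v ∈ (e : Sym2 V) ∧ v ∈ (f : Sym2 V)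
    | _, _ => False)

/-- `G` is `F`-free: no induced subgraph of `G` is isomorphic to `F`. -/
def fFree {W V : Type*} (F : SimpleGraph W) (G : SimpleGraph V) : Prop :=
  ∀ s : Set V, IsEmpty (F ≃g G.induce s)

/-- The subdivision vertex join `G ∨̇ H`: the disjoint union of `S(G)` and `H`,
joining every original vertex of `G` to every vertex of `H`. -/
def svJoin {V W : Type*} (G : SimpleGraph V) (H : SimpleGraph W) :
    SimpleGraph ((V ⊕ G.edgeSet) ⊕ W) :=
  SimpleGraph.fromRel (fun a b => match a, b with
    | Sum.inl x, Sum.inl y => (subdivG G).Adj x y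
    | Sum.inl (Sum.inl _), Sum.inr _ => True
    | Sum.inr w, Sum.inr w' => H.Adj w w'
    | _, _ => False)

/-- The subdivision edge join `G ⊻ H`: the disjoint union of `S(G)` and `H`,
joining every subdivision vertex to every vertex of `H`. -/
def seJoin {V W : Type*} (G : SimpleGraph V) (H : SimpleGraph W) :
    SimpleGraph ((V ⊕ G.edgeSet) ⊕ W) :=
  SimpleGraph.fromRel (fun a b => match a, b with
    | Sum.inl x, Sum.inl y => (subdivG G).Adj x y
    | Sum.inl (Sum.inr _), Sum.inr _ => True
    | Sum.inr w, Sum.inr w' => H.Adj w w'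
    | _, _ => False)

/-- The subdivision vertex edge join `G^S △ (H₁^V ∨ H₂^S)`: the disjoint union of
`S(G)`, `H₁` and `H₂`, joining every original vertex of `G` to every vertex of `H₁`
and every subdivision vertex to every vertex of `H₂`. -/
def sveJoin {V W₁ W₂ : Type*} (G : SimpleGraph V) (H₁ : SimpleGraph W₁)
    (H₂ : SimpleGraph W₂) : SimpleGraph ((V ⊕ G.edgeSet) ⊕ (W₁ ⊕ W₂)) :=
  SimpleGraph.fromRel (fun a b => match a, b with
    | Sum.inl x, Sum.inl y => (subdivG G).Adj x y
    | Sum.inl (Sum.inl _), Sum.inr (Sum.inl _) => True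
    | Sum.inl (Sum.inr _), Sum.inr (Sum.inr _) => True
    | Sum.inr (Sum.inl w), Sum.inr (Sum.inl w') => H₁.Adj w w'
    | Sum.inr (Sum.inr w), Sum.inr (Sum.inr w') => H₂.Adj w w'
    | _, _ => False)

/-- The double corona of a base graph `B` on `A ⊕ E'` with the graphs `H₁, H₂`:
one copy of `H₁` for each `A`-vertex, joined to it, and one copy of `H₂` for each
`E'`-vertex, joined to it. -/
def doubleCorona {A E' W₁ W₂ : Type*} (B : SimpleGraph (A ⊕ E')) (H₁ : SimpleGraph W₁)
    (H₂ : SimpleGraph W₂) : SimpleGraph ((A ⊕ E') ⊕ (A × W₁ ⊕ E' × W₂)) :=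
  SimpleGraph.fromRel (fun a b => match a, b with
    | Sum.inl x, Sum.inl y => B.Adj x y
    | Sum.inl (Sum.inl v), Sum.inr (Sum.inl p) => v = p.1
    | Sum.inl (Sum.inr e), Sum.inr (Sum.inr p) => e = p.1
    | Sum.inr (Sum.inl p), Sum.inr (Sum.inl q) => p.1 = q.1 ∧ H₁.Adj p.2 q.2
    | Sum.inr (Sum.inr p), Sum.inr (Sum.inr q) => p.1 = q.1 ∧ H₂.Adj p.2 q.2
    | _, _ => False)

/-! ### Counting with a relation -/

/-- If a relation between `A` and `B` is total on `A` and relates each element of `B` to at most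
one element of `A`, then `#A ≤ #B`, with equality iff the relation is a bijective correspondence. -/
lemma card_le_of_rel {α β : Type*} (A : Finset α) (B : Finset β) (R : α → β → Prop)
    (h1 : ∀ a ∈ A, ∃ b ∈ B, R a b)
    (h2 : ∀ a ∈ A, ∀ a' ∈ A, ∀ b ∈ B, R a b → R a' b → a = a') :
    A.card ≤ B.card ∧ (A.card = B.card ↔
      (∀ b ∈ B, ∃ a ∈ A, R a b) ∧ ∀ a ∈ A, ∀ b ∈ B, ∀ b' ∈ B, R a b → R a b' → b = b') := by
  rcases isEmpty_or_nonempty β with hβ | hβ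
  · have hA : A = ∅ := Finset.eq_empty_of_forall_notMem fun a ha => hβ.elim (h1 a ha).choose
    have hB : B = ∅ := Finset.eq_empty_of_isEmpty B
    simp [hA, hB]
  choose! f hfB hfR using h1
  have hinj : Set.InjOn f A := fun a ha a' ha' h =>
    h2 a ha a' ha' (f a) (hfB a ha) (hfR a ha) (h ▸ hfR a' ha')
  refine ⟨Finset.card_le_card_of_injOn f hfB hinj, ?_, ?_⟩
  · intro hc
    have hs : ∀ b ∈ B, ∃ a ∈ A, f a = b := by
      intro b hb
      have := Finset.surjOn_of_injOn_of_card_le f hfB hinj hc.ge hb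
      simpa using this
    refine ⟨fun b hb => ?_, fun a ha b hb b' hb' r r' => ?_⟩
    · obtain ⟨a, ha, rfl⟩ := hs b hb
      exact ⟨a, ha, hfR a ha⟩
    · obtain ⟨c, hc, rfl⟩ := hs b hb
      obtain ⟨c', hc', rfl⟩ := hs b' hb'
      rw [h2 c hc a ha _ hb (hfR c hc) r, h2 c' hc' a ha _ hb' (hfR c' hc') r']
  · rintro ⟨hs, hu⟩
    refine Finset.card_bij (fun a _ => f a) hfB (fun a ha a' ha' h => hinj ha ha' h) ?_
    intro b hb
    obtain ⟨a, ha, r⟩ := hs b hb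
    exact ⟨a, ha, hu a ha _ (hfB a ha) _ hb (hfR a ha) r⟩

/-! ### Adjacency and distance 2 in `Q(G)` -/

lemma dist_eq_two_iff' {V : Type*} (X : SimpleGraph V) (u v : V) :
    X.dist u v = 2 ↔ u ≠ v ∧ ¬ X.Adj u v ∧ ∃ w, X.Adj u w ∧ X.Adj w v := by
  have h : X.dist u v = 2 ↔ X.edist u v = 2 := by
    unfold SimpleGraph.dist
    rw [ENat.toNat_eq_iff (by norm_num)]
    rfl
  rw [h, edist_eq_two_iff]
  simp [Set.Nonempty, mem_commonNeighbors, adj_comm]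

section adjacency

variable {V : Type*} (G : SimpleGraph V)

lemma lineG_adj (e f : G.edgeSet) :
    (lineG G).Adj e f ↔ e ≠ f ∧ ∃ v, v ∈ (e : Sym2 V) ∧ v ∈ (f : Sym2 V) := by
  simp only [lineG, fromRel_adj]
  grind

lemma qGraph_adj_inl_inl (u v : V) : ¬ (qGraph G).Adj (Sum.inl u) (Sum.inl v) := by
  simp [qGraph]

lemma qGraph_adj_inl_inr (v : V) (e : G.edgeSet) :
    (qGraph G).Adj (Sum.inl v) (Sum.inr e) ↔ v ∈ (e : Sym2 V) := by
  simp [qGraph]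

lemma qGraph_adj_inr_inl (v : V) (e : G.edgeSet) :
    (qGraph G).Adj (Sum.inr e) (Sum.inl v) ↔ v ∈ (e : Sym2 V) := by
  simp [qGraph]

lemma qGraph_adj_inr_inr (e f : G.edgeSet) :
    (qGraph G).Adj (Sum.inr e) (Sum.inr f) ↔ (lineG G).Adj e f := by
  simp [qGraph, lineG]

lemma qGraph_dist_inl_inl (u v : V) :
    (qGraph G).dist (Sum.inl u) (Sum.inl v) = 2 ↔ G.Adj u v := by
  rw [dist_eq_two_iff']
  simp only [Sum.exists, qGraph_adj_inl_inl, qGraph_adj_inl_inr, qGraph_adj_inr_inl]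
  constructor
  · rintro ⟨h, -, ⟨w, hw, -⟩ | ⟨⟨e, he⟩, hu, hv⟩⟩
    · exact hw.elim
    · have : e = s(u, v) := (Sym2.mem_and_mem_iff (by simpa using h)).1 ⟨hu, hv⟩
      simpa [this] using he
  · intro h
    exact ⟨by simpa using h.ne, by simp, Or.inr ⟨⟨s(u, v), h⟩, by simp, by simp⟩⟩

lemma qGraph_dist_inl_inr (v : V) (f : G.edgeSet) :
    (qGraph G).dist (Sum.inl v) (Sum.inr f) = 2 ↔
      v ∉ (f : Sym2 V) ∧ ∃ a ∈ (f : Sym2 V), G.Adj v a := by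
  rw [dist_eq_two_iff']
  simp only [Sum.exists, qGraph_adj_inl_inl, qGraph_adj_inl_inr, qGraph_adj_inr_inr, lineG_adj]
  constructor
  · rintro ⟨-, h, ⟨w, hw, -⟩ | ⟨⟨e, he⟩, hv, -, a, ha, ha'⟩⟩
    · exact hw.elim
    · have hne : v ≠ a := by rintro rfl; exact h ha'
      have : e = s(v, a) := (Sym2.mem_and_mem_iff hne).1 ⟨hv, ha⟩
      exact ⟨h, a, ha', by simpa [this] using he⟩
  · rintro ⟨h, a, ha, hva⟩
    refine ⟨by simp, h, Or.inr ⟨⟨s(v, a), hva⟩, by simp, ?_, a, by simp, ha⟩⟩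
    rintro rfl
    exact h (by simp)

lemma qGraph_dist_inr_inr (e f : G.edgeSet) :
    (qGraph G).dist (Sum.inr e) (Sum.inr f) = 2 ↔ (lineG G).dist e f = 2 := by
  rw [dist_eq_two_iff', dist_eq_two_iff']
  simp only [Sum.exists, qGraph_adj_inr_inl, qGraph_adj_inl_inr, qGraph_adj_inr_inr, ne_eq,
    Sum.inr.injEq]
  constructor
  · rintro ⟨h, h', ⟨w, hw, hw'⟩ | hw⟩
    · exact (h' ((lineG_adj G e f).2 ⟨h, w, hw, hw'⟩)).elim
    · exact ⟨h, h', hw⟩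
  · rintro ⟨h, h', hw⟩
    exact ⟨h, h', Or.inr hw⟩

end adjacency

lemma deg2_sum {α β : Type*} [Fintype α] [Fintype β] (X : SimpleGraph (α ⊕ β)) (x : α ⊕ β) :
    deg2 X x = (Finset.univ.filter (fun u => X.dist x (Sum.inl u) = 2)).card +
      (Finset.univ.filter (fun u => X.dist x (Sum.inr u) = 2)).card := by
  unfold deg2
  simp only [Finset.card_filter, Fintype.sum_sum_type]

/-! ### Induced cycles of length 3 and 4 -/

lemma fFree_iff {W V : Type*} (F : SimpleGraph W) (G : SimpleGraph V) :
    fFree F G ↔ IsEmpty (F ↪g G) := by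
  constructor
  · intro h
    exact ⟨fun φ => (h (Set.range φ)).elim φ.isoInduceRange⟩
  · intro h s
    exact ⟨fun φ => h.elim ((SimpleGraph.Embedding.induce s).comp φ.toEmbedding)⟩

lemma fFree_three_iff {V : Type*} (G : SimpleGraph V) :
    fFree (cycleGraph 3) G ↔ ∀ a b c, G.Adj a b → G.Adj b c → ¬ G.Adj a c := by
  rw [fFree_iff]
  constructor
  · intro h a b c hab hbc hac
    have h1 := hab.ne
    have h2 := hbc.ne
    have h3 := hac.ne
    refine h.elim ⟨⟨![a, b, c], ?_⟩, ?_⟩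
    · intro i j
      fin_cases i <;> fin_cases j <;> simp_all [eq_comm]
    · intro i j
      change G.Adj (![a, b, c] i) (![a, b, c] j) ↔ _
      fin_cases i <;> fin_cases j <;>
        simp [cycleGraph_three_eq_top, hab, hbc, hac, hab.symm, hbc.symm, hac.symm]
  · intro h
    refine ⟨fun φ => h (φ 0) (φ 1) (φ 2) ?_ ?_ ?_⟩ <;>
      · rw [φ.map_adj_iff, cycleGraph_three_eq_top]
        decide

lemma fFree_four_iff {V : Type*} (G : SimpleGraph V) :
    fFree (cycleGraph 4) G ↔ ∀ a b c d, G.Adj a b → G.Adj b c → G.Adj c d → G.Adj d a →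
      a ≠ c → b ≠ d → ¬ G.Adj a c → G.Adj b d := by
  rw [fFree_iff]
  constructor
  · intro h a b c d hab hbc hcd hda hac hbd nac
    by_contra nbd
    have h1 := hab.ne
    have h2 := hbc.ne
    have h3 := hcd.ne
    have h4 := hda.ne
    have nca : ¬ G.Adj c a := fun h => nac h.symm
    have ndb : ¬ G.Adj d b := fun h => nbd h.symm
    refine h.elim ⟨⟨![a, b, c, d], ?_⟩, ?_⟩
    · intro i j
      fin_cases i <;> fin_cases j <;> simp_all [eq_comm]
    · intro i j
      change G.Adj (![a, b, c, d] i) (![a, b, c, d] j) ↔ _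
      fin_cases i <;> fin_cases j <;>
        simp [cycleGraph_adj, hab, hbc, hcd, hda, hab.symm, hbc.symm, hcd.symm, hda.symm,
          nac, nca, nbd, ndb] <;> decide
  · intro h
    refine ⟨fun φ => ?_⟩
    have key : ∀ i j, (cycleGraph 4).Adj i j ↔ G.Adj (φ i) (φ j) :=
      fun i j => φ.map_adj_iff.symm
    have := h (φ 0) (φ 1) (φ 2) (φ 3) ((key _ _).1 (by rw [cycleGraph_adj]; decide))
      ((key _ _).1 (by rw [cycleGraph_adj]; decide)) ((key _ _).1 (by rw [cycleGraph_adj]; decide))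
      ((key _ _).1 (by rw [cycleGraph_adj]; decide)) (φ.injective.ne (by decide))
      (φ.injective.ne (by decide)) (fun h => by
        have := (key _ _).2 h
        rw [cycleGraph_adj] at this
        revert this; decide)
    have := (key _ _).2 this
    rw [cycleGraph_adj] at this
    revert this; decide

/-! ### Local comparisons in `Q(G)` -/

/-- Comparison at an original vertex `v`: equality holds iff `v` lies in no triangle and every
vertex at distance 2 from `v` has exactly one common neighbour with `v`. -/
lemma vertex_compare {V : Type*} [Fintype V] (G : SimpleGraph V) (v : V) :
    deg1 G v + deg2 G v ≤ deg2 (qGraph G) (Sum.inl v) ∧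
    (deg2 (qGraph G) (Sum.inl v) = deg1 G v + deg2 G v ↔
      (∀ a b, G.Adj v a → G.Adj a b → ¬ G.Adj v b) ∧
      (∀ a b u, G.Adj v a → G.Adj v b → G.Adj a u → G.Adj b u → u ≠ v → ¬ G.Adj v u →
        a = b)) := by
  have hd : deg2 (qGraph G) (Sum.inl v) = deg1 G v + (Finset.univ.filter (fun f : G.edgeSet =>
      v ∉ (f : Sym2 V) ∧ ∃ a ∈ (f : Sym2 V), G.Adj v a)).card := by
    rw [deg2_sum]
    simp only [qGraph_dist_inl_inl, qGraph_dist_inl_inr, deg1]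
  have key := card_le_of_rel (Finset.univ.filter (fun u => G.dist v u = 2))
    (Finset.univ.filter (fun f : G.edgeSet => v ∉ (f : Sym2 V) ∧ ∃ a ∈ (f : Sym2 V), G.Adj v a))
    (fun u f => u ∈ (f : Sym2 V)) ?_ ?_
  · rw [hd]
    unfold deg2
    refine ⟨by have := key.1; omega, ?_⟩
    rw [Nat.add_left_cancel_iff, eq_comm, key.2]
    simp only [Finset.mem_filter, Finset.mem_univ, true_and, dist_eq_two_iff']
    constructor
    · rintro ⟨hs, hu⟩
      refine ⟨fun a b hva hab hvb => ?_, fun a b u hva hvb hau hbu huv nvu => ?_⟩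
      · obtain ⟨u, ⟨-, hn, -⟩, hmem⟩ := hs ⟨s(a, b), hab⟩
          ⟨by simp [hva.ne, hvb.ne], a, by simp, hva⟩
        rcases Sym2.mem_iff.1 hmem with rfl | rfl
        · exact hn hva
        · exact hn hvb
      · have := hu u ⟨huv.symm, nvu, a, hva, hau⟩ ⟨s(a, u), hau⟩
          ⟨by simp [hva.ne, huv.symm], a, by simp, hva⟩ ⟨s(b, u), hbu⟩
          ⟨by simp [hvb.ne, huv.symm], b, by simp, hvb⟩ (by simp) (by simp)
        have := congrArg Subtype.val this
        simp only [Sym2.eq_iff] at this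
        grind
    · rintro ⟨h3, h4⟩
      -- an edge of the second set is `s(a, b)` with `a` adjacent to `v`
      have norm : ∀ f : G.edgeSet, (v ∉ (f : Sym2 V) ∧ ∃ a ∈ (f : Sym2 V), G.Adj v a) →
          ∃ a b, (f : Sym2 V) = s(a, b) ∧ G.Adj v a ∧ G.Adj a b ∧ v ≠ b ∧ ¬ G.Adj v b := by
        rintro ⟨f, hf⟩ ⟨hv, a, ha, hva⟩
        obtain ⟨b, rfl⟩ := ha
        exact ⟨a, b, rfl, hva, hf, fun h => hv (by simp [h]), h3 a b hva hf⟩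
      refine ⟨fun f hf => ?_, fun u hu f hf f' hf' hm hm' => ?_⟩
      · obtain ⟨a, b, he, hva, hab, hvb, nvb⟩ := norm f hf
        exact ⟨b, ⟨hvb, nvb, a, hva, hab⟩, by simp [he]⟩
      · obtain ⟨a, b, he, hva, hab, hvb, nvb⟩ := norm f hf
        obtain ⟨a', b', he', hva', hab', hvb', nvb'⟩ := norm f' hf'
        rw [he, Sym2.mem_iff] at hm
        rw [he', Sym2.mem_iff] at hm'
        have hub : u = b := hm.resolve_left (by rintro rfl; exact hu.2.1 hva)
        have hub' : u = b' := hm'.resolve_left (by rintro rfl; exact hu.2.1 hva')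
        subst hub
        subst hub'
        have := h4 a a' u hva hva' hab hab' hvb.symm nvb
        exact Subtype.ext (by rw [he, he', this])
  · intro u hu
    simp only [Finset.mem_filter, Finset.mem_univ, true_and, dist_eq_two_iff'] at hu ⊢
    obtain ⟨hne, -, w, hvw, hwu⟩ := hu
    exact ⟨⟨s(w, u), hwu⟩, ⟨by simp [hne, hvw.ne], w, by simp, hvw⟩, by simp⟩
  · intro u hu u' hu' f hf hm hm'
    simp only [Finset.mem_filter, Finset.mem_univ, true_and, dist_eq_two_iff'] at hu hu' hf
    obtain ⟨f, hfe⟩ := f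
    obtain ⟨-, a, ⟨b, rfl⟩, hva⟩ := hf
    have h1 := (Sym2.mem_iff.1 hm).resolve_left (by rintro rfl; exact hu.2.1 hva)
    have h2 := (Sym2.mem_iff.1 hm').resolve_left (by rintro rfl; exact hu'.2.1 hva)
    rw [h1, h2]

/-- Comparison at the edge `xy`: equality holds iff this edge lies in no triangle. -/
lemma edge_compare {V : Type*} [Fintype V] (G : SimpleGraph V) (x y : V) (hxy : G.Adj x y) :
    let e : G.edgeSet := ⟨s(x, y), hxy⟩
    deg2 (qGraph G) (Sum.inr e) ≤ deg1 (lineG G) e + deg2 (lineG G) e ∧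
    (deg2 (qGraph G) (Sum.inr e) = deg1 (lineG G) e + deg2 (lineG G) e ↔
      ∀ z, G.Adj x z → ¬ G.Adj y z) := by
  intro e
  have hd : deg2 (qGraph G) (Sum.inr e) = (Finset.univ.filter (fun v : V =>
      v ∉ (e : Sym2 V) ∧ ∃ a ∈ (e : Sym2 V), G.Adj v a)).card + deg2 (lineG G) e := by
    rw [deg2_sum]
    simp only [qGraph_dist_inr_inr, SimpleGraph.dist_comm (u := Sum.inr e) (v := Sum.inl _),
      qGraph_dist_inl_inr, deg2]
  have key := card_le_of_rel
    (Finset.univ.filter (fun v : V => v ∉ (e : Sym2 V) ∧ ∃ a ∈ (e : Sym2 V), G.Adj v a))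
    (Finset.univ.filter (fun f => (lineG G).Adj e f))
    (fun u f => u ∈ (f : Sym2 V)) ?_ ?_
  · rw [hd]
    unfold deg1
    refine ⟨by have := key.1; omega, ?_⟩
    rw [Nat.add_right_cancel_iff, key.2]
    simp only [Finset.mem_filter, Finset.mem_univ, true_and, lineG_adj]
    constructor
    · rintro ⟨-, hu⟩ z hxz hyz
      have := hu z ⟨by simp [e, hxz.ne', hyz.ne'], x, by simp [e], hxz.symm⟩
        ⟨s(x, z), hxz⟩ ⟨?_, x, by simp [e], by simp⟩ ⟨s(y, z), hyz⟩
        ⟨?_, y, by simp [e], by simp⟩ (by simp) (by simp)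
      · have := congrArg Subtype.val this
        simp only [Sym2.eq_iff] at this
        have := hxy.ne
        have := hxz.ne
        grind
      · intro h
        have := congrArg Subtype.val h
        simp only [e, Sym2.eq_iff] at this
        have := hxz.ne
        have := hyz.ne
        grind
      · intro h
        have := congrArg Subtype.val h
        simp only [e, Sym2.eq_iff] at this
        have := hxz.ne
        have := hyz.ne
        grind
    · intro h3
      -- a neighbour of `e` in the line graph has exactly one end outside `e`
      have norm : ∀ f : G.edgeSet, (e ≠ f ∧ ∃ v, v ∈ (e : Sym2 V) ∧ v ∈ (f : Sym2 V)) →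
          ∃ a b, (f : Sym2 V) = s(a, b) ∧ a ∈ (e : Sym2 V) ∧ b ∉ (e : Sym2 V) ∧ G.Adj a b := by
        rintro ⟨f, hf⟩ ⟨hne, a, ha, b, rfl⟩
        refine ⟨a, b, rfl, ha, fun hb => hne ?_, hf⟩
        exact Subtype.ext ((Sym2.mem_and_mem_iff (G.ne_of_adj hf)).1 ⟨ha, hb⟩)
      refine ⟨fun f hf => ?_, fun u hu f hf f' hf' hm hm' => ?_⟩
      · obtain ⟨a, b, he, ha, hb, hab⟩ := norm f hf
        exact ⟨b, ⟨hb, a, ha, hab.symm⟩, by simp [he]⟩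
      · obtain ⟨a, b, he, ha, hb, hab⟩ := norm f hf
        obtain ⟨a', b', he', ha', hb', hab'⟩ := norm f' hf'
        rw [he, Sym2.mem_iff] at hm
        rw [he', Sym2.mem_iff] at hm'
        have hub : u = b := hm.resolve_left (by rintro rfl; exact hu.1 ha)
        have hub' : u = b' := hm'.resolve_left (by rintro rfl; exact hu.1 ha')
        subst hub
        subst hub'
        have haa : a = a' := by
          simp only [e, Sym2.mem_iff] at ha ha'
          rcases ha with rfl | rfl <;> rcases ha' with rfl | rfl
          · rfl
          · exact (h3 u hab hab').elim
          · exact (h3 u hab' hab).elim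
          · rfl
        exact Subtype.ext (by rw [he, he', haa])
  · intro u hu
    simp only [Finset.mem_filter, Finset.mem_univ, true_and, lineG_adj] at hu ⊢
    obtain ⟨hne, a, ha, hua⟩ := hu
    refine ⟨⟨s(u, a), hua⟩, ⟨?_, a, ha, by simp⟩, by simp⟩
    intro h
    rw [h] at hne
    simp at hne
  · intro u hu u' hu' f hf hm hm'
    simp only [Finset.mem_filter, Finset.mem_univ, true_and, lineG_adj] at hu hu' hf
    obtain ⟨f, hfe⟩ := f
    obtain ⟨-, a, ha, b, rfl⟩ := hf
    have h1 := (Sym2.mem_iff.1 hm).resolve_left (by rintro rfl; exact hu.1 ha)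
    have h2 := (Sym2.mem_iff.1 hm').resolve_left (by rintro rfl; exact hu'.1 ha)
    rw [h1, h2]

theorem qGraph_deg2 {V : Type*} [Fintype V] (G : SimpleGraph V)
    (hconn : G.Connected) :
    (∀ v : V, deg1 G v + deg2 G v ≤ deg2 (qGraph G) (Sum.inl v)) ∧
    ((∀ v : V, deg2 (qGraph G) (Sum.inl v) = deg1 G v + deg2 G v) ↔
      (fFree (SimpleGraph.cycleGraph 3) G ∧ fFree (SimpleGraph.cycleGraph 4) G)) ∧
    (∀ e : G.edgeSet, deg2 (qGraph G) (Sum.inr e) ≤ deg1 (lineG G) e + deg2 (lineG G) e) ∧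
    ((∀ e : G.edgeSet, deg2 (qGraph G) (Sum.inr e) = deg1 (lineG G) e + deg2 (lineG G) e) ↔
      fFree (SimpleGraph.cycleGraph 3) G) := by
  refine ⟨fun v => (vertex_compare G v).1, ?_, ?_, ?_⟩
  · rw [fFree_three_iff, fFree_four_iff]
    constructor
    · intro h
      have h' := fun v => (vertex_compare G v).2.1 (h v)
      refine ⟨fun a b c hab hbc => (h' a).1 b c hab hbc, ?_⟩
      intro a b c d hab hbc hcd hda hac hbd nac
      exact (hbd ((h' a).2 b d c hab hda.symm hbc hcd.symm hac.symm nac)).elim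
    · rintro ⟨h3, h4⟩ v
      refine (vertex_compare G v).2.2 ⟨fun a b hva hab => h3 v a b hva hab, ?_⟩
      intro a b u hva hvb hau hbu huv nvu
      by_contra hab
      exact h3 v a b hva (h4 v a u b hva hau hbu.symm hvb.symm huv.symm hab nvu) hvb
  · rintro ⟨e, he⟩
    induction e using Sym2.ind with
    | h x y => exact (edge_compare G x y he).1
  · rw [fFree_three_iff]
    constructor
    · intro h a b c hab hbc hac
      exact (edge_compare G a b hab).2.1 (h ⟨s(a, b), hab⟩) c hac hbc
    · rintro h3 ⟨e, he⟩
      induction e using Sym2.ind with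
      | h x y => exact (edge_compare G x y he).2.2 fun z hxz hyz => h3 x y z he hyz hxz
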